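/- Let 2 ≤ k ≤ n−1, let X = (ℝ^n, ‖·‖) with ‖x‖ = max{ |x_1| + … + |x_{n−k+2}| , |x_{n−k+3}|, …, |x_n| }, and let Y = {x ∈ ℝ^n : x_1 + x_2 + x_3 = 0, x_i = 0 for 4 ≤ i ≤ n−k+2}. Then λ(Y,X) = 4/3 and the affine dimension of the set of minimal projections from X onto Y equals k(n−k) − 2. -/

import Mathlib

open Metric Module

noncomputable section

variable {X : Type*} [NormedAddCommGroup X] [NormedSpace ℝ X]

def IsProjOnto (Y : Submodule ℝ X) (P : X →L[ℝ] X) : Prop :=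
  (∀ x, P x ∈ Y) ∧ ∀ y ∈ Y, P y = y

def relProjConst (Y : Submodule ℝ X) : ℝ :=
  sInf {c | ∃ P : X →L[ℝ] X, IsProjOnto Y P ∧ ‖P‖ = c}

def MinProjSet (Y : Submodule ℝ X) : Set (X →L[ℝ] X) :=
  {P | IsProjOnto Y P ∧ ‖P‖ = relProjConst Y}

def adim {M : Type*} [AddCommGroup M] [Module ℝ M] (S : Set M) : ℕ :=
  finrank ℝ (affineSpan ℝ S).direction

/-!
Let the norm be the maximum of the `ℓ¹`-norm over `S` and the `ℓ^∞`-norm off `S`, and let `Y`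
consist of the vectors whose coordinates over `T ⊆ S` sum to zero and whose coordinates over
`S \ T` vanish; the theorem is the case of three indices in `T`. A vector of `Y` with coordinate
`c` at an index in `T` has norm at least `2 * c`, because its coordinates over `T` sum to zero. The
diagonal entries over `T` of a projection `P` onto `Y` sum to `#T - 1`, and each of them is at most
`‖P‖ / 2`; hence `‖P‖ ≥ 2 - 2 / #T`, and equality forces all of them to be `1 - 1 / #T`. So the
difference of two projections attaining the bound kills `Y`, has range in `Y`, and sends the basis
vectors with index in `T` to vectors whose coordinates over `S` vanish. Conversely, subtracting the
mean over `T` attains the bound, and since `2 - 2 / #T > 1` for `#T ≥ 3`, adding any sufficiently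
small map with these three properties does not increase the norm. The maps with these properties
therefore form the direction of the affine span of the minimal projections.
-/

section LinearAlgebra

variable {K V : Type*} [Field K] [AddCommGroup V] [Module K V]

/-- The endomorphisms of `V` which vanish on `Y`, take values in `Y` and send `v` into `W`. For `v`
outside `Y` this is the space of maps `V ⧸ Y → Y` subject to one constraint. -/
def constrainedMaps (Y W : Submodule K V) (v : V) : Submodule K (V →ₗ[K] V) where
  carrier := {L | (∀ x, L x ∈ Y) ∧ (∀ y ∈ Y, L y = 0) ∧ L v ∈ W}
  add_mem' := fun ⟨hL, hL₀, hLv⟩ ⟨hM, hM₀, hMv⟩ =>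
    ⟨fun x => Y.add_mem (hL x) (hM x), fun y hy => by simp [hL₀ y hy, hM₀ y hy],
      W.add_mem hLv hMv⟩
  zero_mem' := ⟨fun _ => Y.zero_mem, fun _ _ => rfl, W.zero_mem⟩
  smul_mem' := fun c _ ⟨hL, hL₀, hLv⟩ =>
    ⟨fun x => Y.smul_mem c (hL x), fun y hy => by simp [hL₀ y hy], W.smul_mem c hLv⟩

/-- A map `V ⧸ Y → Y` regarded as an endomorphism of `V`. -/
def extendQuotientMap (Y : Submodule K V) : (V ⧸ Y →ₗ[K] Y) →ₗ[K] V →ₗ[K] V :=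
  LinearMap.lcomp K V Y.mkQ ∘ₗ Y.subtype.compRight K

@[simp]
lemma extendQuotientMap_apply (Y : Submodule K V) (φ : V ⧸ Y →ₗ[K] Y) (x : V) :
    extendQuotientMap Y φ x = φ (Y.mkQ x) := rfl

lemma extendQuotientMap_injective (Y : Submodule K V) :
    Function.Injective (extendQuotientMap Y) := by
  refine fun φ ψ h => LinearMap.ext fun q => Subtype.ext ?_
  obtain ⟨x, rfl⟩ := Y.mkQ_surjective q
  exact LinearMap.congr_fun h x

lemma constrainedMaps_eq_map (Y W : Submodule K V) (v : V) :
    constrainedMaps Y W v =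
      ((W.comap Y.subtype).comap (LinearMap.applyₗ (Y.mkQ v))).map (extendQuotientMap Y) := by
  ext L
  constructor
  · rintro ⟨hL, hL₀, hLv⟩
    exact ⟨Y.liftQ (L.codRestrict Y hL) fun y hy => Subtype.ext (hL₀ y hy), hLv, rfl⟩
  · rintro ⟨φ, hφ, rfl⟩
    exact ⟨fun x => (φ (Y.mkQ x)).2, fun y hy => by simp [(Submodule.Quotient.mk_eq_zero Y).2 hy],
      hφ⟩

lemma applyₗ_surjective_of_ne_zero {v : V} (hv : v ≠ 0) (U : Type*) [AddCommGroup U] [Module K U] :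
    Function.Surjective (LinearMap.applyₗ v : (V →ₗ[K] U) →ₗ[K] U) := by
  intro u
  obtain ⟨f, hf⟩ := Projective.exists_dual_eq_one K hv
  exact ⟨f.smulRight u, by simp [hf]⟩

lemma finrank_comap_add_finrank_of_surjective {U : Type*} [AddCommGroup U] [Module K U]
    [FiniteDimensional K V] {f : V →ₗ[K] U} (hf : Function.Surjective f) (W : Submodule K U) :
    finrank K (W.comap f) + finrank K U = finrank K V + finrank K W := by
  have : FiniteDimensional K U := Module.Finite.of_surjective f hf
  have hmkQ : Function.Surjective (W.mkQ ∘ₗ f) := W.mkQ_surjective.comp hf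
  have hker := (W.mkQ ∘ₗ f).finrank_range_add_finrank_ker
  have hquot := W.finrank_quotient_add_finrank
  rw [LinearMap.range_eq_top.2 hmkQ, finrank_top, LinearMap.ker_comp,
    W.ker_mkQ] at hker
  omega

lemma finrank_constrainedMaps_add_finrank [FiniteDimensional K V] {Y W : Submodule K V} {v : V}
    (hWY : W ≤ Y) (hv : v ∉ Y) :
    finrank K (constrainedMaps Y W v) + finrank K Y =
      finrank K (V ⧸ Y) * finrank K Y + finrank K W := by
  have hv' : Y.mkQ v ≠ 0 := by simpa using hv
  rw [constrainedMaps_eq_map,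
    ← (Submodule.equivMapOfInjective _ (extendQuotientMap_injective Y) _).finrank_eq,
    finrank_comap_add_finrank_of_surjective (applyₗ_surjective_of_ne_zero hv' Y),
    finrank_linearMap, (Submodule.comapSubtypeEquivOfLe hWY).finrank_eq]

lemma finrank_inf_ker_add_one [FiniteDimensional K V] {W : Submodule K V} {f : V →ₗ[K] K} {v : V}
    (hvW : v ∈ W) (hv : f v ≠ 0) : finrank K ↥(W ⊓ f.ker) + 1 = finrank K W := by
  have hf : f ∘ₗ W.subtype ≠ 0 := fun h => hv (LinearMap.congr_fun h ⟨v, hvW⟩)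
  have := finrank_comap_add_finrank_of_surjective (LinearMap.surjective hf) ⊥
  rw [← Submodule.map_comap_subtype, Submodule.finrank_map_subtype_eq]
  rwa [finrank_self, finrank_bot] at this

end LinearAlgebra

lemma direction_affineSpan_eq_of_eventually_add_mem {𝕜 V : Type*} [NontriviallyNormedField 𝕜]
    [AddCommGroup V] [Module 𝕜 V] [TopologicalSpace V] [ContinuousSMul 𝕜 V] {s : Set V}
    {D : Submodule 𝕜 V} {p : V} (hs : ∀ q ∈ s, q - p ∈ D)
    (hD : ∀ᶠ v in nhds 0, v ∈ D → p + v ∈ s) : (affineSpan 𝕜 s).direction = D := by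
  have hp : p ∈ s := by simpa using hD.self_of_nhds
  rw [direction_affineSpan]
  apply le_antisymm
  · rw [vectorSpan_eq_span_vsub_set_right 𝕜 hp, Submodule.span_le]
    rintro _ ⟨q, hq, rfl⟩
    exact hs q hq
  · intro v hv
    have hlim : Filter.Tendsto (fun c : 𝕜 => c • v) (nhdsWithin 0 {0}ᶜ) (nhds 0) := by
      have : Continuous fun c : 𝕜 => c • v := by fun_prop
      exact (this.tendsto' 0 0 (zero_smul 𝕜 v)).mono_left nhdsWithin_le_nhds
    obtain ⟨c, hc, hc₀⟩ := ((hlim.eventually hD).and self_mem_nhdsWithin).exists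
    have := vsub_mem_vectorSpan 𝕜 (hc (D.smul_mem c hv)) hp
    rwa [vsub_eq_sub, add_sub_cancel_left, Submodule.smul_mem_iff _ hc₀] at this

section FiniteSums

variable {ι : Type*} {T : Finset ι}

lemma two_mul_le_sum_abs_of_sum_eq_zero {f : ι → ℝ} (hf : ∑ i ∈ T, f i = 0) {i : ι} (hi : i ∈ T) :
    2 * f i ≤ ∑ j ∈ T, |f j| := by
  classical
  rw [← Finset.add_sum_erase T f hi] at hf
  rw [← Finset.add_sum_erase T (fun j => |f j|) hi]
  have := Finset.abs_sum_le_sum_abs f (T.erase i)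
  linarith [le_abs_self (f i), neg_le_abs (∑ j ∈ T.erase i, f j)]

lemma sum_abs_sub_mean_le (f : ι → ℝ) :
    ∑ i ∈ T, |f i - (∑ j ∈ T, f j) / T.card| ≤ (2 - 2 / T.card) * ∑ i ∈ T, |f i| := by
  classical
  rcases T.eq_empty_or_nonempty with rfl | hT
  · simp
  have ht : (1 : ℝ) ≤ T.card := mod_cast hT.card_pos
  set t : ℝ := (T.card : ℝ)
  have hterm : ∀ i ∈ T, |f i - (∑ j ∈ T, f j) / t| ≤
      (1 - 2 / t) * |f i| + (∑ j ∈ T, |f j|) / t := fun i hi => by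
    rw [← Finset.add_sum_erase T f hi, ← Finset.add_sum_erase T (fun j => |f j|) hi]
    calc |f i - (f i + ∑ j ∈ T.erase i, f j) / t|
        = |(1 - 1 / t) * f i - (∑ j ∈ T.erase i, f j) / t| := by congr 1; ring
      _ ≤ |(1 - 1 / t) * f i| + |(∑ j ∈ T.erase i, f j) / t| := abs_sub _ _
      _ ≤ (1 - 1 / t) * |f i| + (∑ j ∈ T.erase i, |f j|) / t := by
        rw [abs_mul, abs_div, abs_of_nonneg (sub_nonneg.2 (div_le_one_of_le₀ ht (by linarith))),
          abs_of_pos (by linarith : 0 < t)]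
        gcongr
        exact Finset.abs_sum_le_sum_abs f _
      _ = _ := by ring
  refine (Finset.sum_le_sum hterm).trans_eq ?_
  rw [Finset.sum_add_distrib, ← Finset.mul_sum, Finset.sum_const, nsmul_eq_mul]
  field

end FiniteSums

section Coordinates

variable {K V ι : Type*} [Field K] [AddCommGroup V] [Module K V] (b : Basis ι K V)

/-- The vectors whose coordinates with index in `S` vanish. -/
def vanishingOn (S : Finset ι) : Submodule K V := ⨅ i ∈ S, (b.coord i).ker

variable {b}

lemma mem_vanishingOn {S : Finset ι} {x : V} : x ∈ vanishingOn b S ↔ ∀ i ∈ S, b.repr x i = 0 := by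
  simp [vanishingOn]

lemma sum_repr_basis {T : Finset ι} {i : ι} (hi : i ∈ T) : ∑ j ∈ T, b.repr (b i) j = 1 := by
  classical
  simp [Finsupp.single_apply, hi]

lemma vanishingOn_eq_span (S : Finset ι) : vanishingOn b S = Submodule.span K (b '' (↑S)ᶜ) := by
  ext x
  rw [mem_vanishingOn, b.mem_span_image]
  simp only [Set.subset_def, Finset.mem_coe, Finsupp.mem_support_iff, Set.mem_compl_iff]
  exact forall_congr' fun i => by tauto

variable [DecidableEq ι]

variable (b) in
/-- The vectors whose coordinates with index in `T` sum to zero and whose other coordinates with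
index in `S` vanish. -/
def centeredSubmodule (S T : Finset ι) : Submodule K V :=
  vanishingOn b (S \ T) ⊓ (∑ i ∈ T, b.coord i).ker

variable {S T : Finset ι}

lemma mem_centeredSubmodule {x : V} :
    x ∈ centeredSubmodule b S T ↔ (∀ i ∈ S \ T, b.repr x i = 0) ∧ ∑ i ∈ T, b.repr x i = 0 := by
  simp [centeredSubmodule, mem_vanishingOn]

lemma repr_sum_smul_apply (A : Finset ι) (c : ι → K) (i : ι) :
    b.repr (∑ j ∈ A, c j • b j) i = if i ∈ A then c i else 0 := by
  simp [Finsupp.single_apply]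

lemma vanishingOn_le_centeredSubmodule (hTS : T ⊆ S) :
    vanishingOn b S ≤ centeredSubmodule b S T := fun x hx => by
  rw [mem_vanishingOn] at hx
  exact mem_centeredSubmodule.2
    ⟨fun i hi => hx i (Finset.sdiff_subset hi), Finset.sum_eq_zero fun i hi => hx i (hTS hi)⟩

lemma mem_vanishingOn_of_mem_centeredSubmodule {x : V} (hx : x ∈ centeredSubmodule b S T)
    (hxT : ∀ i ∈ T, b.repr x i = 0) : x ∈ vanishingOn b S := by
  refine mem_vanishingOn.2 fun i hi => ?_
  by_cases hiT : i ∈ T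
  · exact hxT i hiT
  · exact (mem_centeredSubmodule.1 hx).1 i (Finset.mem_sdiff.2 ⟨hi, hiT⟩)

lemma basis_notMem_centeredSubmodule {i : ι} (hi : i ∈ T) : b i ∉ centeredSubmodule b S T :=
  fun h => one_ne_zero ((sum_repr_basis hi).symm.trans (mem_centeredSubmodule.1 h).2)

lemma basis_mem_vanishingOn_sdiff {i : ι} (hi : i ∈ T) : b i ∈ vanishingOn b (S \ T) := by
  refine mem_vanishingOn.2 fun j hj => ?_
  rw [b.repr_self, Finsupp.single_eq_of_ne]
  rintro rfl
  exact (Finset.mem_sdiff.1 hj).2 hi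

lemma basis_sub_basis_mem_centeredSubmodule {i j : ι} (hi : i ∈ T) (hj : j ∈ T) :
    b i - b j ∈ centeredSubmodule b S T := by
  refine Submodule.mem_inf.2
    ⟨sub_mem (basis_mem_vanishingOn_sdiff hi) (basis_mem_vanishingOn_sdiff hj), ?_⟩
  simp [Finsupp.single_apply, hi, hj]

lemma sub_sum_smul_sub_smul_mem_centeredSubmodule {i₀ : ι} (hi₀ : i₀ ∈ T) (x : V) :
    x - ∑ j ∈ S \ T, b.repr x j • b j - (∑ i ∈ T, b.repr x i) • b i₀ ∈
      centeredSubmodule b S T := by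
  refine Submodule.mem_inf.2 ⟨sub_mem (mem_vanishingOn.2 fun i hi => ?_)
    (Submodule.smul_mem _ _ (basis_mem_vanishingOn_sdiff hi₀)), ?_⟩
  · rw [map_sub, Finsupp.sub_apply, repr_sum_smul_apply, if_pos hi, sub_self]
  · have hdisj : ∑ i ∈ T, b.repr (∑ j ∈ S \ T, b.repr x j • b j) i = 0 :=
      Finset.sum_eq_zero fun i hi => by
        rw [repr_sum_smul_apply, if_neg fun h => (Finset.mem_sdiff.1 h).2 hi]
    simp only [LinearMap.mem_ker, LinearMap.sum_apply, Basis.coord_apply, map_sub, map_smul,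
      hdisj, sum_repr_basis hi₀, smul_eq_mul, mul_one, sub_zero, sub_self]

-- Modulo the centered submodule, `x` is a combination of `b i₀` and the `b j` with `j ∈ S \ T`.
lemma repr_apply_eq_of_mem_constrainedMaps {L : V →ₗ[K] V} {i₀ : ι}
    (hL : L ∈ constrainedMaps (centeredSubmodule b S T) (vanishingOn b S) (b i₀)) (hi₀ : i₀ ∈ T)
    (x : V) {i : ι} (hi : i ∈ S) :
    b.repr (L x) i = b.repr (L (∑ j ∈ S \ T, b.repr x j • b j)) i := by
  have hzero := hL.2.1 _ (sub_sum_smul_sub_smul_mem_centeredSubmodule hi₀ x)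
  rw [map_sub, map_sub, map_smul, sub_sub, sub_eq_zero] at hzero
  simp [hzero, mem_vanishingOn.1 hL.2.2 i hi]

variable (b S T) in
/-- The projection onto `centeredSubmodule b S T` which subtracts from every coordinate with index
in `T` the mean of these coordinates and deletes the other coordinates with index in `S`. -/
def centering : V →ₗ[K] V :=
  LinearMap.id - ((T.card : K)⁻¹ • ∑ i ∈ T, b.coord i).smulRight (∑ i ∈ T, b i) -
    ∑ j ∈ S \ T, (b.coord j).smulRight (b j)

lemma centering_apply (x : V) :
    centering b S T x = x - ∑ i ∈ T, ((∑ j ∈ T, b.repr x j) / T.card) • b i -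
      ∑ j ∈ S \ T, b.repr x j • b j := by
  simp [centering, ← Finset.smul_sum, div_eq_inv_mul]

lemma repr_centering_apply (x : V) (i : ι) :
    b.repr (centering b S T x) i =
      b.repr x i - (if i ∈ T then (∑ j ∈ T, b.repr x j) / T.card else 0) -
        if i ∈ S \ T then b.repr x i else 0 := by
  rw [centering_apply, map_sub, map_sub, Finsupp.sub_apply, Finsupp.sub_apply,
    repr_sum_smul_apply T fun _ => _, repr_sum_smul_apply]

lemma repr_centering_apply_of_mem {i : ι} (hi : i ∈ T) (x : V) :
    b.repr (centering b S T x) i = b.repr x i - (∑ j ∈ T, b.repr x j) / T.card := by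
  simp [repr_centering_apply, hi]

lemma repr_centering_apply_of_notMem {i : ι} (hi : i ∉ S) (hTS : T ⊆ S) (x : V) :
    b.repr (centering b S T x) i = b.repr x i := by
  simp [repr_centering_apply, hi, Finset.notMem_mono hTS hi]

lemma centering_mem (hT : (T.card : K) ≠ 0) (x : V) :
    centering b S T x ∈ centeredSubmodule b S T := by
  refine mem_centeredSubmodule.2 ⟨fun i hi => ?_, ?_⟩
  · simp [repr_centering_apply, hi, (Finset.mem_sdiff.1 hi).2]
  · rw [Finset.sum_congr rfl fun i hi => repr_centering_apply_of_mem hi x, Finset.sum_sub_distrib,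
      Finset.sum_const, nsmul_eq_mul, mul_div_cancel₀ _ hT, sub_self]

lemma centering_eq_self {x : V} (hx : x ∈ centeredSubmodule b S T) : centering b S T x = x := by
  obtain ⟨hxS, hxT⟩ := mem_centeredSubmodule.1 hx
  have hdel : ∑ j ∈ S \ T, b.repr x j • b j = 0 :=
    Finset.sum_eq_zero fun j hj => by rw [hxS j hj, zero_smul]
  simp [centering_apply, hxT, hdel]

lemma finrank_vanishingOn [Fintype ι] : finrank K (vanishingOn b S) = Sᶜ.card := by
  have hli : LinearIndependent K fun i : ↥Sᶜ => b i :=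
    b.linearIndependent.comp _ Subtype.val_injective
  rw [vanishingOn_eq_span, ← Finset.coe_compl, Set.image_eq_range]
  exact (finrank_span_eq_card hli).trans (Fintype.card_coe _)

lemma finrank_centeredSubmodule_add_one [Fintype ι] (hTS : T ⊆ S) (hT : T.Nonempty) :
    finrank K (centeredSubmodule b S T) + 1 = Sᶜ.card + T.card := by
  have := Module.Finite.of_basis b
  obtain ⟨i, hi⟩ := hT
  have hne : (∑ j ∈ T, b.coord j) (b i) ≠ 0 := by
    simpa using (sum_repr_basis (b := b) hi).trans_ne one_ne_zero
  rw [centeredSubmodule, finrank_inf_ker_add_one (basis_mem_vanishingOn_sdiff hi) hne,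
    finrank_vanishingOn, Finset.card_compl, Finset.card_compl, Finset.card_sdiff_of_subset hTS]
  have := Finset.card_le_card hTS
  have := S.card_le_univ
  omega

lemma finrank_quotient_centeredSubmodule [Finite ι] (hTS : T ⊆ S) (hT : T.Nonempty) :
    finrank K (V ⧸ centeredSubmodule b S T) = (S \ T).card + 1 := by
  have := Fintype.ofFinite ι
  have := Module.Finite.of_basis b
  have hquot := (centeredSubmodule b S T).finrank_quotient_add_finrank
  have hsub := finrank_centeredSubmodule_add_one (b := b) hTS hT
  rw [finrank_eq_card_basis b, ← S.card_add_card_compl] at hquot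
  have := Finset.card_sdiff_add_card_eq_card hTS
  omega

lemma finrank_constrainedMaps_centeredSubmodule [Fintype ι] {i₀ : ι} (hTS : T ⊆ S) (hi₀ : i₀ ∈ T) :
    finrank K (constrainedMaps (centeredSubmodule b S T) (vanishingOn b S) (b i₀)) =
      (Sᶜ.card + T.card - 1) * ((S \ T).card + 1) - (T.card - 1) := by
  have := Module.Finite.of_basis b
  have hmaps := finrank_constrainedMaps_add_finrank
    (vanishingOn_le_centeredSubmodule (b := b) hTS) (basis_notMem_centeredSubmodule hi₀)
  have hsub := finrank_centeredSubmodule_add_one (b := b) hTS ⟨i₀, hi₀⟩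
  rw [finrank_quotient_centeredSubmodule hTS ⟨i₀, hi₀⟩, finrank_vanishingOn, mul_comm,
    Nat.eq_sub_of_add_eq hsub] at hmaps
  have := Finset.card_pos.2 ⟨i₀, hi₀⟩
  omega

end Coordinates

section NormedSpace

variable {ι : Type*} [DecidableEq ι] {b : Basis ι ℝ X} {S T : Finset ι}

namespace IsProjOnto

lemma map_sub_eq {Y : Submodule ℝ X} {P : X →L[ℝ] X} (hP : IsProjOnto Y P) {x y : X}
    (hxy : x - y ∈ Y) : P x - P y = x - y := by
  rw [← map_sub, hP.2 _ hxy]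

lemma add_of_mem_constrainedMaps {Y W : Submodule ℝ X} {v : X} {P L : X →L[ℝ] X}
    (hP : IsProjOnto Y P) (hL : (L : X →ₗ[ℝ] X) ∈ constrainedMaps Y W v) :
    IsProjOnto Y (P + L) :=
  ⟨fun x => Y.add_mem (hP.1 x) (hL.1 x), fun y hy =>
    (congrArg₂ (· + ·) (hP.2 y hy) (hL.2.1 y hy)).trans (add_zero y)⟩

lemma sum_repr_apply_basis {P : X →L[ℝ] X}
    (hP : IsProjOnto (centeredSubmodule b S T) P) (hT : T.Nonempty) :
    ∑ i ∈ T, b.repr (P (b i)) i = T.card - 1 := by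
  obtain ⟨i₀, hi₀⟩ := hT
  have hdiag : ∀ i ∈ T, b.repr (P (b i)) i =
      b.repr (P (b i₀)) i + (1 - b.repr (b i₀) i) := fun i hi => by
    have := hP.map_sub_eq (basis_sub_basis_mem_centeredSubmodule hi hi₀)
    rw [sub_eq_iff_eq_add'.1 this]
    simp
  rw [Finset.sum_congr rfl hdiag, Finset.sum_add_distrib, Finset.sum_sub_distrib,
    (mem_centeredSubmodule.1 (hP.1 _)).2, sum_repr_basis hi₀]
  simp

end IsProjOnto

lemma isProjOnto_centering [FiniteDimensional ℝ X] (hT : T.Nonempty) :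
    IsProjOnto (centeredSubmodule b S T) (centering b S T).toContinuousLinearMap :=
  ⟨centering_mem (mod_cast hT.card_ne_zero), fun _ => centering_eq_self⟩

lemma sum_abs_repr_centering_le (hTS : T ⊆ S) (hT : T.Nonempty) (x : X) :
    ∑ i ∈ S, |b.repr (centering b S T x) i| ≤ (2 - 2 / T.card) * ∑ i ∈ T, |b.repr x i| := by
  have hT₀ : (T.card : ℝ) ≠ 0 := mod_cast hT.card_ne_zero
  rw [← Finset.sum_sdiff hTS, Finset.sum_eq_zero fun i hi => by
    rw [(mem_centeredSubmodule.1 (centering_mem hT₀ x)).1 i hi, abs_zero], zero_add,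
    Finset.sum_congr rfl fun i hi => by rw [repr_centering_apply_of_mem hi x]]
  exact sum_abs_sub_mean_le _

variable [Fintype ι]

/-- The norm of `X` is the maximum of the `ℓ¹`-norm of the coordinates with index in `S` and the
`ℓ^∞`-norm of the remaining coordinates. -/
def IsMixedNorm (b : Basis ι ℝ X) (S : Finset ι) : Prop :=
  ∀ x : X, ‖x‖ = max (∑ i ∈ S, |b.repr x i|) (Sᶜ.sup fun i => ‖b.repr x i‖₊ : NNReal)

namespace IsMixedNorm

lemma norm_le_iff (hnorm : IsMixedNorm b S) {x : X} {c : ℝ} (hc : 0 ≤ c) :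
    ‖x‖ ≤ c ↔ ∑ i ∈ S, |b.repr x i| ≤ c ∧ ∀ i ∉ S, |b.repr x i| ≤ c := by
  lift c to NNReal using hc
  rw [hnorm x, max_le_iff, NNReal.coe_le_coe, Finset.sup_le_iff]
  simp only [Finset.mem_compl, ← NNReal.coe_le_coe, coe_nnnorm, Real.norm_eq_abs]

lemma sum_abs_repr_le_norm (hnorm : IsMixedNorm b S) (x : X) : ∑ i ∈ S, |b.repr x i| ≤ ‖x‖ :=
  ((hnorm.norm_le_iff (norm_nonneg x)).1 le_rfl).1

lemma abs_repr_le_norm (hnorm : IsMixedNorm b S) (x : X) {i : ι} (hi : i ∉ S) :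
    |b.repr x i| ≤ ‖x‖ :=
  ((hnorm.norm_le_iff (norm_nonneg x)).1 le_rfl).2 i hi

lemma norm_basis_le_one (hnorm : IsMixedNorm b S) (i : ι) : ‖b i‖ ≤ 1 := by
  refine (hnorm.norm_le_iff zero_le_one).2 ⟨?_, fun j _ => ?_⟩
  all_goals
    simp only [b.repr_self, Finsupp.single_apply, apply_ite abs, abs_one, abs_zero]
    try rw [Finset.sum_ite_eq]
    split_ifs <;> norm_num

lemma norm_sum_smul_basis_le (hnorm : IsMixedNorm b S) (A : Finset ι) (c : ι → ℝ) :
    ‖∑ j ∈ A, c j • b j‖ ≤ ∑ j ∈ A, |c j| :=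
  norm_sum_le_of_le _ fun j _ => by
    rw [norm_smul, Real.norm_eq_abs]
    exact mul_le_of_le_one_right (abs_nonneg _) (hnorm.norm_basis_le_one j)

end IsMixedNorm

namespace IsProjOnto

variable {P Q : X →L[ℝ] X}

lemma two_mul_repr_apply_basis_le_norm (hP : IsProjOnto (centeredSubmodule b S T) P)
    (hnorm : IsMixedNorm b S) (hTS : T ⊆ S) {i : ι} (hi : i ∈ T) :
    2 * b.repr (P (b i)) i ≤ ‖P‖ :=
  calc 2 * b.repr (P (b i)) i ≤ ∑ j ∈ T, |b.repr (P (b i)) j| :=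
        two_mul_le_sum_abs_of_sum_eq_zero (mem_centeredSubmodule.1 (hP.1 _)).2 hi
    _ ≤ ∑ j ∈ S, |b.repr (P (b i)) j| :=
        Finset.sum_le_sum_of_subset_of_nonneg hTS fun _ _ _ => abs_nonneg _
    _ ≤ ‖P (b i)‖ := hnorm.sum_abs_repr_le_norm _
    _ ≤ ‖P‖ := P.unit_le_opNorm _ (hnorm.norm_basis_le_one i)

lemma two_sub_le_norm (hP : IsProjOnto (centeredSubmodule b S T) P) (hnorm : IsMixedNorm b S)
    (hTS : T ⊆ S) (hT : T.Nonempty) : 2 - 2 / T.card ≤ ‖P‖ := by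
  have ht : (0 : ℝ) < T.card := mod_cast hT.card_pos
  have hsum := Finset.sum_le_card_nsmul T _ _
    fun i hi => hP.two_mul_repr_apply_basis_le_norm hnorm hTS hi
  rw [← Finset.mul_sum, hP.sum_repr_apply_basis hT, nsmul_eq_mul] at hsum
  calc 2 - 2 / (T.card : ℝ) = 2 * (T.card - 1) / T.card := by field
    _ ≤ ‖P‖ := (div_le_iff₀' ht).2 hsum

lemma repr_apply_basis_eq (hP : IsProjOnto (centeredSubmodule b S T) P) (hnorm : IsMixedNorm b S)
    (hTS : T ⊆ S) (hPnorm : ‖P‖ = 2 - 2 / T.card) {i : ι} (hi : i ∈ T) :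
    b.repr (P (b i)) i = 1 - 1 / T.card := by
  have ht : (0 : ℝ) < T.card := mod_cast Finset.card_pos.2 ⟨i, hi⟩
  have hle : ∀ j ∈ T, b.repr (P (b j)) j ≤ 1 - 1 / T.card := fun j hj => by
    have := hP.two_mul_repr_apply_basis_le_norm hnorm hTS hj
    rw [hPnorm] at this
    linarith [show 2 / (T.card : ℝ) = 2 * (1 / T.card) by ring]
  refine (Finset.sum_eq_sum_iff_of_le hle).1 ?_ i hi
  rw [hP.sum_repr_apply_basis ⟨i, hi⟩, Finset.sum_const, nsmul_eq_mul]
  field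

lemma sub_mem_constrainedMaps (hP : IsProjOnto (centeredSubmodule b S T) P)
    (hQ : IsProjOnto (centeredSubmodule b S T) Q) (hnorm : IsMixedNorm b S) (hTS : T ⊆ S)
    (hPnorm : ‖P‖ = 2 - 2 / T.card) (hQnorm : ‖Q‖ = 2 - 2 / T.card) {i₀ : ι} (hi₀ : i₀ ∈ T) :
    ((P - Q : X →L[ℝ] X) : X →ₗ[ℝ] X) ∈
      constrainedMaps (centeredSubmodule b S T) (vanishingOn b S) (b i₀) := by
  have hmem : ∀ x, P x - Q x ∈ centeredSubmodule b S T := fun x => sub_mem (hP.1 x) (hQ.1 x)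
  refine ⟨hmem, fun y hy => ?_, mem_vanishingOn_of_mem_centeredSubmodule (hmem _) fun i hi => ?_⟩
  · simp [hP.2 y hy, hQ.2 y hy]
  · have hii₀ := basis_sub_basis_mem_centeredSubmodule (b := b) (S := S) hi₀ hi
    have hconst : P (b i₀) - Q (b i₀) = P (b i) - Q (b i) := by
      rw [← sub_eq_zero, sub_sub_sub_comm, hP.map_sub_eq hii₀, hQ.map_sub_eq hii₀, sub_self]
    change b.repr (P (b i₀) - Q (b i₀)) i = 0
    rw [hconst, map_sub, Finsupp.sub_apply, hP.repr_apply_basis_eq hnorm hTS hPnorm hi,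
      hQ.repr_apply_basis_eq hnorm hTS hQnorm hi, sub_self]

end IsProjOnto

section UpperBound

variable {L : X →L[ℝ] X} {i₀ : ι}

lemma IsMixedNorm.sum_abs_repr_apply_le (hnorm : IsMixedNorm b S)
    (hL : (L : X →ₗ[ℝ] X) ∈ constrainedMaps (centeredSubmodule b S T) (vanishingOn b S) (b i₀))
    (hi₀ : i₀ ∈ T) (x : X) :
    ∑ i ∈ S, |b.repr (L x) i| ≤ ‖L‖ * ∑ j ∈ S \ T, |b.repr x j| :=
  calc ∑ i ∈ S, |b.repr (L x) i|
      = ∑ i ∈ S, |b.repr (L (∑ j ∈ S \ T, b.repr x j • b j)) i| :=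
        Finset.sum_congr rfl fun _ hi =>
          congrArg abs (repr_apply_eq_of_mem_constrainedMaps hL hi₀ x hi)
    _ ≤ ‖L (∑ j ∈ S \ T, b.repr x j • b j)‖ := hnorm.sum_abs_repr_le_norm _
    _ ≤ ‖L‖ * ∑ j ∈ S \ T, |b.repr x j| :=
        L.le_opNorm_of_le (hnorm.norm_sum_smul_basis_le _ _)

lemma IsMixedNorm.norm_centering_add_le (hnorm : IsMixedNorm b S) (hTS : T ⊆ S)
    (hL : (L : X →ₗ[ℝ] X) ∈ constrainedMaps (centeredSubmodule b S T) (vanishingOn b S) (b i₀))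
    (hi₀ : i₀ ∈ T) (hLnorm : ‖L‖ ≤ 1 - 2 / T.card) (x : X) :
    ‖centering b S T x + L x‖ ≤ (2 - 2 / T.card) * ‖x‖ := by
  have hconst : (0 : ℝ) ≤ 2 - 2 / T.card := by linarith [norm_nonneg L]
  refine (hnorm.norm_le_iff (by positivity)).2 ⟨?_, fun i hi => ?_⟩
  · calc ∑ i ∈ S, |b.repr (centering b S T x + L x) i|
        ≤ ∑ i ∈ S, |b.repr (centering b S T x) i| + ∑ i ∈ S, |b.repr (L x) i| := by
          rw [← Finset.sum_add_distrib]
          exact Finset.sum_le_sum fun i _ => by simpa using abs_add_le _ _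
      _ ≤ (2 - 2 / T.card) * ∑ i ∈ T, |b.repr x i| +
            (2 - 2 / T.card) * ∑ i ∈ S \ T, |b.repr x i| := by
          gcongr
          · exact sum_abs_repr_centering_le hTS ⟨i₀, hi₀⟩ x
          · refine (hnorm.sum_abs_repr_apply_le hL hi₀ x).trans ?_
            gcongr
            linarith
      _ = (2 - 2 / T.card) * ∑ i ∈ S, |b.repr x i| := by
          rw [← mul_add, add_comm, Finset.sum_sdiff hTS]
      _ ≤ (2 - 2 / T.card) * ‖x‖ := by gcongr; exact hnorm.sum_abs_repr_le_norm x
  · calc |b.repr (centering b S T x + L x) i|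
        = |b.repr x i + b.repr (L x) i| := by
          rw [map_add, Finsupp.add_apply, repr_centering_apply_of_notMem hi hTS]
      _ ≤ ‖x‖ + (1 - 2 / T.card) * ‖x‖ :=
          (abs_add_le _ _).trans <| add_le_add (hnorm.abs_repr_le_norm x hi) <|
            (hnorm.abs_repr_le_norm _ hi).trans (L.le_of_opNorm_le hLnorm x)
      _ = (2 - 2 / T.card) * ‖x‖ := by ring

end UpperBound

section Minimal

variable [FiniteDimensional ℝ X]

lemma IsMixedNorm.norm_centering_add_eq (hnorm : IsMixedNorm b S) (hTS : T ⊆ S) {i₀ : ι}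
    {L : X →L[ℝ] X}
    (hL : (L : X →ₗ[ℝ] X) ∈ constrainedMaps (centeredSubmodule b S T) (vanishingOn b S) (b i₀))
    (hi₀ : i₀ ∈ T) (hLnorm : ‖L‖ ≤ 1 - 2 / T.card) :
    ‖(centering b S T).toContinuousLinearMap + L‖ = 2 - 2 / T.card :=
  le_antisymm
    (ContinuousLinearMap.opNorm_le_bound _ (by linarith [norm_nonneg L])
      (hnorm.norm_centering_add_le hTS hL hi₀ hLnorm))
    (((isProjOnto_centering ⟨i₀, hi₀⟩).add_of_mem_constrainedMaps hL).two_sub_le_norm hnorm hTS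
      ⟨i₀, hi₀⟩)

lemma IsMixedNorm.relProjConst_centeredSubmodule (hnorm : IsMixedNorm b S) (hTS : T ⊆ S)
    (hT : 2 ≤ T.card) : relProjConst (centeredSubmodule b S T) = 2 - 2 / T.card := by
  have hne : T.Nonempty := Finset.card_pos.1 (by omega)
  obtain ⟨i₀, hi₀⟩ := hne
  have hT' : (2 : ℝ) ≤ T.card := mod_cast hT
  have hconst : ‖(0 : X →L[ℝ] X)‖ ≤ 1 - 2 / T.card := by
    rw [norm_zero, sub_nonneg]
    exact div_le_one_of_le₀ hT' (by linarith)
  have hmin := hnorm.norm_centering_add_eq hTS (L := 0) (Submodule.zero_mem _) hi₀ hconst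
  rw [add_zero] at hmin
  refine IsLeast.csInf_eq ⟨⟨_, isProjOnto_centering ⟨i₀, hi₀⟩, hmin⟩, ?_⟩
  rintro _ ⟨P, hP, rfl⟩
  exact hP.two_sub_le_norm hnorm hTS ⟨i₀, hi₀⟩

lemma IsMixedNorm.direction_affineSpan_minProjSet (hnorm : IsMixedNorm b S) (hTS : T ⊆ S)
    (hT : 3 ≤ T.card) {i₀ : ι} (hi₀ : i₀ ∈ T) :
    (affineSpan ℝ (MinProjSet (centeredSubmodule b S T))).direction =
      (constrainedMaps (centeredSubmodule b S T) (vanishingOn b S) (b i₀)).map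
        (LinearMap.toContinuousLinearMap : (X →ₗ[ℝ] X) ≃ₗ[ℝ] X →L[ℝ] X).toLinearMap := by
  have hrel := hnorm.relProjConst_centeredSubmodule hTS (by omega)
  have hT' : (3 : ℝ) ≤ T.card := mod_cast hT
  have hpos : 0 < 1 - 2 / (T.card : ℝ) := by
    rw [sub_pos, div_lt_one] <;> linarith
  have hmin : ∀ L : X →L[ℝ] X, ‖L‖ < 1 - 2 / T.card → (L : X →ₗ[ℝ] X) ∈
      constrainedMaps (centeredSubmodule b S T) (vanishingOn b S) (b i₀) →
      (centering b S T).toContinuousLinearMap + L ∈ MinProjSet (centeredSubmodule b S T) :=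
    fun L hLnorm hL => ⟨(isProjOnto_centering ⟨i₀, hi₀⟩).add_of_mem_constrainedMaps hL,
      (hnorm.norm_centering_add_eq hTS hL hi₀ hLnorm.le).trans hrel.symm⟩
  refine direction_affineSpan_eq_of_eventually_add_mem
    (p := (centering b S T).toContinuousLinearMap) (fun P hP => ?_) ?_
  · have hcenter := hmin 0 (by simpa using hpos) (Submodule.zero_mem _)
    rw [add_zero] at hcenter
    rw [Submodule.mem_map_equiv]
    exact hP.1.sub_mem_constrainedMaps hcenter.1 hnorm hTS (hP.2.trans hrel)
      (hcenter.2.trans hrel) hi₀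
  · filter_upwards [ball_mem_nhds 0 hpos] with L hLnorm hL
    rw [Submodule.mem_map_equiv] at hL
    exact hmin L (mem_ball_zero_iff.1 hLnorm) hL

end Minimal

theorem mixed_norm_example_adim_general (hnorm : IsMixedNorm b S) (hTS : T ⊆ S)
    (hT : 3 ≤ T.card) :
    relProjConst (centeredSubmodule b S T) = 2 - 2 / T.card ∧
      adim (MinProjSet (centeredSubmodule b S T)) =
        (Sᶜ.card + T.card - 1) * ((S \ T).card + 1) - (T.card - 1) := by
  have := Module.Finite.of_basis b
  obtain ⟨i₀, hi₀⟩ : T.Nonempty := Finset.card_pos.1 (by omega)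
  refine ⟨hnorm.relProjConst_centeredSubmodule hTS (by omega), ?_⟩
  rw [adim, hnorm.direction_affineSpan_minProjSet hTS hT hi₀, LinearEquiv.finrank_map_eq,
    finrank_constrainedMaps_centeredSubmodule hTS hi₀]

end NormedSpace

/-- Let `2 ≤ k ≤ n - 1` and let `X` be `ℝⁿ` (identified via `e`) with the norm
`‖x‖ = max { |x₀| + ⋯ + |x_{n-k+1}|, |x_{n-k+2}|, …, |x_{n-1}| }` (0-indexed), and let
`Y = {x : x₀ + x₁ + x₂ = 0 and x_i = 0 for 3 ≤ i < n - k + 2}`. Then `λ(Y, X) = 4/3`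
and the affine dimension of the set of minimal projections equals `k(n-k) - 2`. -/
theorem mixed_norm_example_adim {n k : ℕ} (hk2 : 2 ≤ k) (hkn : k ≤ n - 1)
    (e : X ≃ₗ[ℝ] (Fin n → ℝ))
    (hnorm : ∀ x : X,
      ‖x‖ = max
        (∑ i ∈ Finset.univ.filter (fun i : Fin n => (i : ℕ) < n - k + 2), |e x i|)
        (((Finset.univ.filter (fun i : Fin n => n - k + 2 ≤ (i : ℕ))).sup
            fun i => ‖e x i‖₊ : NNReal) : ℝ))
    (Y : Submodule ℝ X)
    (hY : ∀ x : X, x ∈ Y ↔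
      (e x ⟨0, by omega⟩ + e x ⟨1, by omega⟩ + e x ⟨2, by omega⟩ = 0 ∧
        ∀ i : Fin n, 3 ≤ (i : ℕ) → (i : ℕ) < n - k + 2 → e x i = 0)) :
    relProjConst Y = 4 / 3 ∧ adim (MinProjSet Y) = k * (n - k) - 2 := by
  set b := Basis.ofEquivFun e
  set S := Finset.univ.filter fun i : Fin n => (i : ℕ) < n - k + 2
  set T : Finset (Fin n) := {⟨0, by omega⟩, ⟨1, by omega⟩, ⟨2, by omega⟩}
  have hmemT : ∀ i, i ∈ T ↔ (i : ℕ) < 3 := fun i => by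
    simp only [T, Finset.mem_insert, Finset.mem_singleton, Fin.ext_iff]; omega
  have hmemS : ∀ i, i ∈ S ↔ (i : ℕ) < n - k + 2 := fun i => Finset.mem_filter_univ i
  have hT : T.card = 3 := by simp [T]
  have hTS : T ⊆ S := fun i hi => by rw [hmemT] at hi; rw [hmemS]; omega
  have hS : S.card = n - k + 2 := by rw [Fin.card_filter_val_lt]; omega
  have hmixed : IsMixedNorm b S := fun x => by
    simpa [b, S, Finset.compl_filter, not_lt] using hnorm x
  have hYeq : Y = centeredSubmodule b S T := by
    ext x
    have hsum : ∑ i ∈ T, b.repr x i =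
        e x ⟨0, by omega⟩ + e x ⟨1, by omega⟩ + e x ⟨2, by omega⟩ := by simp [T, b, add_assoc]
    rw [hY, mem_centeredSubmodule, hsum, and_comm]
    simp only [Finset.mem_sdiff, hmemS, hmemT, not_lt, and_imp, b, Basis.ofEquivFun_repr_apply]
    exact and_congr_left' (forall_congr' fun _ => imp.swap)
  obtain ⟨hconst, hdim⟩ := mixed_norm_example_adim_general hmixed hTS hT.ge
  rw [Finset.card_compl, Fintype.card_fin, Finset.card_sdiff_of_subset hTS, hS, hT,
    show n - (n - k + 2) + 3 - 1 = k by omega, show n - k + 2 - 3 + 1 = n - k by omega] at hdim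
  rw [hYeq, hconst, hdim, hT]
  norm_num
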